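/- Let k ≥ 1 and n = (8k+4)N + 1 for a positive integer N. Then there exists a set of mutually orthogonal cyclic (4k+2)-cycle systems of K_n of cardinality at least N/(96k+30) − 1 = (n−1)/((8k+4)(96k+30)) − 1. In particular, if n ≡ 1 (mod 2(4k+2)), then μ(4k+2,n) ≥ μ'(4k+2,n) ≥ (n−1)/((8k+4)(96k+30)) − 1. -/

import Mathlib

/-- The edge set of the closed walk through `f 0, f 1, …, f (ℓ-1), f 0`. -/
def cycleEdges {V : Type*} [DecidableEq V] (ℓ : ℕ) (f : Fin ℓ → V) : Finset (Sym2 V) :=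
  Finset.univ.image (fun i : Fin ℓ => s(f i, f ⟨(i.val + 1) % ℓ, Nat.mod_lt _ i.pos⟩))

/-- `E` is the edge set of an `ℓ`-cycle. -/
def IsCycle {V : Type*} [DecidableEq V] (ℓ : ℕ) (E : Finset (Sym2 V)) : Prop :=
  ∃ f : Fin ℓ → V, Function.Injective f ∧ E = cycleEdges ℓ f

/-- `F` is an `ℓ`-cycle system of the complete graph on `V`: a set of `ℓ`-cycles whose
edge sets partition the edge set of the complete graph. -/
def IsCycleSystem {V : Type*} [DecidableEq V] (ℓ : ℕ) (F : Set (Finset (Sym2 V))) : Prop :=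
  (∀ E ∈ F, IsCycle ℓ E) ∧
  F.Pairwise (fun E E' => Disjoint E E') ∧
  (∀ e : Sym2 V, ¬ e.IsDiag ↔ ∃ E ∈ F, e ∈ E)

/-- Two cycle systems are orthogonal when any two cycles, one from each,
share at most one edge. -/
def Orthog {V : Type*} [DecidableEq V] (F F' : Set (Finset (Sym2 V))) : Prop :=
  ∀ E ∈ F, ∀ E' ∈ F', (E ∩ E').card ≤ 1

/-- Translation of a cycle (given by its edge set) by `g ∈ ZMod n`. -/
def translateCycle {n : ℕ} (g : ZMod n) (E : Finset (Sym2 (ZMod n))) : Finset (Sym2 (ZMod n)) :=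
  E.image (Sym2.map (· + g))

/-- A cycle system of the complete graph on `ZMod n` is cyclic if closed under translation. -/
def IsCyclicSystem {n : ℕ} (F : Set (Finset (Sym2 (ZMod n)))) : Prop :=
  ∀ E ∈ F, ∀ g : ZMod n, translateCycle g E ∈ F

/-!
A family of base cycles whose signed differences cover every nonzero element of `ZMod n` exactly
once generates a cyclic cycle system by translation. Such families arise from the closed zigzag
`x₀ z₀ x₁ z₁ … x₂ₖ z₂ₖ` whose edge lengths are `N` times the numbers `0, 1, …, 4k, 4k + 2`. Given
offsets `y₀, …, y₂ₖ` in `{1, …, N}`, move `xⱼ` by `yⱼ₋₁` and `zⱼ` by `yⱼ₋₁ + yⱼ`, with cyclic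
indices: each edge length is then moved by a single offset, so it ranges over a block of `N`
consecutive integers if that offset ranges over `{1, …, N}`. The missing block `4k + 1` consists of
the negatives modulo `n = (8k + 4)N + 1` of the block `4k + 2`.

If translates of the zigzags with offsets `y` and `z` have a common edge, then it has the same
position in both of them and `y - z` vanishes in the column that gives its length. Two common
edges make `y - z` take the same value in two different columns. This is impossible for the
arithmetic progressions `r + c i` and `r' + c i'` modulo `N` with `i ≠ i'` and
`2 k i, 2 k i' < N`, and there are at least `N / (2k)` such differences `i`.
-/

open Function

section Arithmetic

theorem mul_add_lt_mul_add {N a b x w : ℕ} (hab : a < b) (hx : x ≤ N) (hw : 0 < w) :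
    a * N + x < b * N + w := by
  nlinarith [Nat.mul_le_mul_right N (Nat.succ_le_of_lt hab)]

theorem mul_add_inj {N a b x w : ℕ} (hx : x ∈ Set.Icc 1 N) (hw : w ∈ Set.Icc 1 N) :
    a * N + x = b * N + w ↔ a = b ∧ x = w := by
  refine ⟨fun h => ?_, fun ⟨ha, hx⟩ => by rw [ha, hx]⟩
  obtain rfl : a = b := by
    rcases lt_trichotomy a b with hab | hab | hab
    · exact absurd h (mul_add_lt_mul_add hab hx.2 hw.1).ne
    · exact hab
    · exact absurd h (mul_add_lt_mul_add hab hw.2 hx.1).ne'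
  exact ⟨rfl, Nat.add_left_cancel h⟩

theorem units_smul_natCast_eq_iff {n a b : ℕ} (ha₀ : 0 < a) (ha : a < n) (hb : b < n)
    (hab : a + b ≠ n) (s t : ℤˣ) : s • (a : ZMod n) = t • (b : ZMod n) ↔ s = t ∧ a = b := by
  refine ⟨fun h => ?_, fun ⟨hs, ha⟩ => by rw [hs, ha]⟩
  obtain rfl | rfl : s = t ∨ s = -t := (eq_or_ne s t).imp_right Int.units_ne_iff_eq_neg.mp
  · exact ⟨rfl, CharP.natCast_injOn_Iio (ZMod n) n ha hb (smul_left_cancel s h)⟩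
  · have hsum : ((a + b : ℕ) : ZMod n) = 0 := by
      rw [Units.neg_smul, ← smul_neg] at h
      rw [Nat.cast_add, ← neg_eq_iff_add_eq_zero]
      exact smul_left_cancel t h
    obtain ⟨m, hm⟩ := (ZMod.natCast_eq_zero_iff _ _).mp hsum
    have hm_lt : m < 2 := by
      by_contra! h2
      nlinarith
    interval_cases m <;> omega

theorem injOn_natCast_sub_natCast {n N : ℕ} {y z : ℕ → ℕ} (hn : 2 * N < n)
    (hy : ∀ c, y c ∈ Set.Icc 1 N) (hz : ∀ c, z c ∈ Set.Icc 1 N) {C : Set ℕ}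
    (hyz : Set.InjOn (fun c => (y c : ℤ) - z c) C) :
    Set.InjOn (fun c => (y c : ZMod n) - z c) C := by
  intro c hc c' hc' h
  refine hyz hc hc' ?_
  have hyc := hy c
  have hzc := hz c
  have hyc' := hy c'
  have hzc' := hz c'
  rw [Set.mem_Icc] at *
  have hsum : y c + z c' = y c' + z c := by
    refine CharP.natCast_injOn_Iio (ZMod n) n (Set.mem_Iio.mpr (by omega))
      (Set.mem_Iio.mpr (by omega)) ?_
    push_cast
    linear_combination h
  dsimp only
  omega

end Arithmetic

section CycleEdges

variable {V : Type*} [DecidableEq V] {ℓ : ℕ}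

theorem mem_cycleEdges [NeZero ℓ] {f : Fin ℓ → V} {e : Sym2 V} :
    e ∈ cycleEdges ℓ f ↔ ∃ p, s(f p, f (p + 1)) = e := by
  have next_eq (p : Fin ℓ) : (⟨(p.val + 1) % ℓ, Nat.mod_lt _ p.pos⟩ : Fin ℓ) = p + 1 :=
    Fin.ext (by simp [Fin.val_add])
  simp only [cycleEdges, next_eq, Finset.mem_image, Finset.mem_univ, true_and]

theorem IsCycle.card_eq {E : Finset (Sym2 V)} (hE : IsCycle ℓ E) (hℓ : 3 ≤ ℓ) : E.card = ℓ := by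
  obtain ⟨f, hf, rfl⟩ := hE
  rw [cycleEdges, Finset.card_image_of_injective, Finset.card_univ, Fintype.card_fin]
  intro p q hpq
  simp only [Sym2.eq_iff, hf.eq_iff, Fin.ext_iff] at hpq
  obtain ⟨h, -⟩ | ⟨hp, hq⟩ := hpq
  · exact Fin.ext h
  · exfalso
    have hpℓ : p.val + 1 ≤ ℓ := p.isLt
    have hqℓ : q.val + 1 ≤ ℓ := q.isLt
    rcases hpℓ.lt_or_eq with h₁ | h₁ <;> rcases hqℓ.lt_or_eq with h₂ | h₂ <;>
      simp only [h₁, h₂, Nat.mod_eq_of_lt, Nat.mod_self] at hp hq <;> omega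

theorem Orthog.ne {F F' : Set (Finset (Sym2 V))} (h : Orthog F F') (hF : ∀ E ∈ F, IsCycle ℓ E)
    (hℓ : 3 ≤ ℓ) (hne : F.Nonempty) : F ≠ F' := by
  rintro rfl
  obtain ⟨E, hE⟩ := hne
  have := h E hE E hE
  rw [Finset.inter_self, (hF E hE).card_eq hℓ] at this
  omega

end CycleEdges

section Development

variable {G ι ι' : Type*} [AddCommGroup G] {ℓ : ℕ}

/-- The development of the family of base cycles `f r`: the set of all their translates. -/
def development [DecidableEq G] (f : ι → Fin ℓ → G) : Set (Finset (Sym2 G)) :=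
  {E | ∃ r g, E = cycleEdges ℓ fun p => f r p + g}

theorem isCyclicSystem_development {n : ℕ} (f : ι → Fin ℓ → ZMod n) :
    IsCyclicSystem (development f) := by
  rintro _ ⟨r, g, rfl⟩ t
  refine ⟨r, g + t, ?_⟩
  simp only [translateCycle, cycleEdges, Finset.image_image]
  exact Finset.image_congr fun p _ => by simp [add_assoc]

variable [NeZero ℓ]

/-- The difference of the closed walk `f` along the edge in position `u.1`, traversed in the
direction given by the sign `u.2`. -/
def signedStep (f : Fin ℓ → G) (u : Fin ℓ × ℤˣ) : G :=
  u.2 • (f (u.1 + 1) - f u.1)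

/-- A difference family of `ℓ`-cycles: the signed differences of the base cycles `f r` cover every
nonzero element of the group exactly once. -/
structure IsDifferenceFamily (f : ι → Fin ℓ → G) : Prop where
  injective : ∀ r, Injective (f r)
  bijOn : Set.BijOn (fun a : ι × Fin ℓ × ℤˣ => signedStep (f a.1) a.2) Set.univ {0}ᶜ

theorem signedStep_eq_of_edge_eq {f f' : Fin ℓ → G} {p q : Fin ℓ} {g g' : G}
    (h : s(f p + g, f (p + 1) + g) = s(f' q + g', f' (q + 1) + g')) :
    (signedStep f (p, 1) = signedStep f' (q, 1) ∧ f p - f' q = g' - g) ∨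
      signedStep f (p, 1) = signedStep f' (q, -1) := by
  simp only [signedStep, one_smul, Units.neg_smul]
  obtain ⟨h₁, h₂⟩ | ⟨h₁, h₂⟩ := Sym2.eq_iff.mp h
  · exact .inl ⟨by simpa using congrArg₂ (· - ·) h₂ h₁,
      sub_eq_sub_iff_add_eq_add.mpr (h₁.trans (add_comm _ _))⟩
  · exact .inr (by simpa using congrArg₂ (· - ·) h₂ h₁)

theorem IsDifferenceFamily.of_injective [Fintype G] [Fintype ι] {f : ι → Fin ℓ → G}
    (hf : ∀ r, Injective (f r))
    (hinj : Injective fun a : ι × Fin ℓ × ℤˣ => signedStep (f a.1) a.2)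
    (hcard : Fintype.card G = 2 * ℓ * Fintype.card ι + 1) : IsDifferenceFamily f := by
  classical
  have ne_zero (a : ι × Fin ℓ × ℤˣ) : signedStep (f a.1) a.2 ≠ 0 := by
    obtain ⟨r, p, t⟩ := a
    intro h
    have : signedStep (f r) (p, t) = signedStep (f r) (p, -t) := by
      simp only [signedStep, Units.neg_smul] at h ⊢
      rw [h, neg_zero]
    simpa using hinj (a₁ := (r, p, t)) (a₂ := (r, p, -t)) this
  have surjOn : Set.SurjOn (fun a : ι × Fin ℓ × ℤˣ => signedStep (f a.1) a.2)
      ((Finset.univ : Finset (ι × Fin ℓ × ℤˣ)) : Set (ι × Fin ℓ × ℤˣ))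
      (({0}ᶜ : Finset G) : Set G) := by
    refine Finset.surjOn_of_injOn_of_card_le _ (fun a _ => by simpa using ne_zero a) hinj.injOn ?_
    simp only [Finset.card_compl, hcard, Finset.card_singleton, add_tsub_cancel_right,
      Finset.card_univ, Fintype.card_prod, Fintype.card_fin, Fintype.card_units_int]
    exact le_of_eq (by ring)
  exact ⟨hf, fun a _ => ne_zero a, hinj.injOn, by simpa using surjOn⟩

variable [DecidableEq G]

theorem IsDifferenceFamily.isCycleSystem_development {f : ι → Fin ℓ → G}
    (hf : IsDifferenceFamily f) : IsCycleSystem ℓ (development f) := by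
  refine ⟨?_, ?_, fun e => ⟨?_, ?_⟩⟩
  · rintro _ ⟨r, g, rfl⟩
    exact ⟨_, (add_left_injective g).comp (hf.injective r), rfl⟩
  · rintro _ ⟨r, g, rfl⟩ _ ⟨r', g', rfl⟩ hne
    refine Finset.disjoint_left.mpr fun e he he' => hne ?_
    obtain ⟨p, rfl⟩ := mem_cycleEdges.mp he
    obtain ⟨q, hq⟩ := mem_cycleEdges.mp he'
    have eq_of_step_eq {s t : ℤˣ} (h : signedStep (f r) (p, s) = signedStep (f r') (q, t)) :
        (r, p, s) = (r', q, t) := hf.bijOn.injOn trivial trivial h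
    obtain ⟨hstep, hg⟩ | hstep := signedStep_eq_of_edge_eq hq.symm
    · obtain ⟨rfl, rfl⟩ : r = r' ∧ p = q := by simpa using eq_of_step_eq hstep
      rw [sub_self, eq_comm, sub_eq_zero] at hg
      rw [hg]
    · simpa using eq_of_step_eq hstep
  · induction e with | _ a b
    intro hab
    obtain ⟨⟨r, p, t⟩, -, ht⟩ := hf.bijOn.surjOn
      (show b - a ∈ ({0}ᶜ : Set G) from sub_ne_zero.mpr fun h => hab h.symm)
    obtain rfl | rfl := Int.units_eq_one_or t <;>
      simp only [signedStep, one_smul, Units.neg_smul, neg_sub] at ht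
    · refine ⟨_, ⟨r, a - f r p, rfl⟩, mem_cycleEdges.mpr ⟨p, Sym2.eq_iff.mpr (.inl ⟨?_, ?_⟩)⟩⟩
      · exact add_sub_cancel _ _
      · linear_combination (norm := abel) ht
    · refine ⟨_, ⟨r, b - f r p, rfl⟩, mem_cycleEdges.mpr ⟨p, Sym2.eq_iff.mpr (.inr ⟨?_, ?_⟩)⟩⟩
      · exact add_sub_cancel _ _
      · linear_combination (norm := abel) -ht
  · rintro ⟨_, ⟨r, g, rfl⟩, he⟩ hdiag
    obtain ⟨p, rfl⟩ := mem_cycleEdges.mp he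
    have step_ne_zero : signedStep (f r) (p, 1) ≠ 0 :=
      hf.bijOn.mapsTo (x := (r, p, 1)) trivial
    rw [Sym2.mk_isDiag_iff, add_left_inj] at hdiag
    simp [signedStep, hdiag] at step_ne_zero

theorem orthog_development {f : ι → Fin ℓ → G} {f' : ι' → Fin ℓ → G}
    (hpos : ∀ r r' u v, signedStep (f r) u = signedStep (f' r') v → u = v)
    (hshift : ∀ r r', Set.InjOn (fun p => f r p - f' r' p)
      {p | signedStep (f r) (p, 1) = signedStep (f' r') (p, 1)}) :
    Orthog (development f) (development f') := by
  rintro _ ⟨r, g, rfl⟩ _ ⟨r', g', rfl⟩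
  have shared_edge {e : Sym2 G} (he : e ∈ cycleEdges ℓ (fun p => f r p + g) ∩
      cycleEdges ℓ (fun p => f' r' p + g')) : ∃ p, s(f r p + g, f r (p + 1) + g) = e ∧
        signedStep (f r) (p, 1) = signedStep (f' r') (p, 1) ∧ f r p - f' r' p = g' - g := by
    obtain ⟨he₁, he₂⟩ := Finset.mem_inter.mp he
    obtain ⟨p, rfl⟩ := mem_cycleEdges.mp he₁
    obtain ⟨q, hq⟩ := mem_cycleEdges.mp he₂
    obtain ⟨hstep, hg⟩ | hstep := signedStep_eq_of_edge_eq hq.symm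
    · obtain rfl : p = q := congrArg Prod.fst (hpos _ _ _ _ hstep)
      exact ⟨p, rfl, hstep, hg⟩
    · simpa using hpos _ _ _ _ hstep
  refine Finset.card_le_one.mpr fun e he e' he' => ?_
  obtain ⟨p, rfl, hp, hpg⟩ := shared_edge he
  obtain ⟨q, rfl, hq, hqg⟩ := shared_edge he'
  rw [hshift r r' hp hq (hpg.trans hqg.symm)]

end Development

section Offset

/-- The offset in column `c` of the base cycle `r` of the system `i`: an element of `{1, …, N}`
running, modulo `N`, through the arithmetic progression with first term `r + 1` and difference
`i`. -/
def offset (N i r c : ℕ) : ℕ :=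
  (r + c * i) % N + 1

variable {N i i' : ℕ}

theorem offset_mem_Icc (hN : 0 < N) (i r c : ℕ) : offset N i r c ∈ Set.Icc 1 N :=
  ⟨Nat.le_add_left 1 _, Nat.mod_lt _ hN⟩

theorem injOn_offset (N i c : ℕ) : Set.InjOn (fun r => offset N i r c) (Set.Iio N) := by
  intro r hr r' hr' h
  have hmod : r + c * i ≡ r' + c * i [MOD N] := Nat.succ_injective h
  exact (hmod.add_right_cancel' _).eq_of_lt_of_lt hr hr'

theorem injOn_offset_sub_offset {w : ℕ} (hi : w * i < N) (hi' : w * i' < N) (hne : i ≠ i')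
    (r r' : ℕ) :
    Set.InjOn (fun c => (offset N i r c : ℤ) - offset N i' r' c) (Set.Iic w) := by
  intro c hc c' hc' h
  rw [Set.mem_Iic] at hc hc'
  have dvd : (N : ℤ) ∣ ((c : ℤ) - c') * ((i : ℤ) - i') := by
    rw [← ZMod.intCast_zmod_eq_zero_iff_dvd]
    have hcast := congrArg (Int.cast : ℤ → ZMod N) h
    simp only [offset] at hcast
    push_cast [ZMod.natCast_mod] at hcast ⊢
    linear_combination hcast
  have abs_lt : |((c : ℤ) - c') * ((i : ℤ) - i')| < N := by
    rw [abs_mul]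
    calc |(c : ℤ) - c'| * |(i : ℤ) - i'| ≤ w * max i i' := by
          gcongr <;> rw [abs_le] <;> omega
      _ < N := by
          norm_cast
          rcases max_choice i i' with h | h <;> rwa [h]
  have := mul_eq_zero.mp (Int.eq_zero_of_abs_lt_dvd dvd abs_lt)
  omega

end Offset

section BlockZigzag

/-- The block of the low vertex `xⱼ` of the zigzag, where the block `b` consists of the integers
`bN + 1, …, bN + N`. The jump after `x₀` keeps the edge lengths of the zigzag out of the block
`4k + 1`, and the one before `xₖ` leaves the block `2k + 2` to the closing edge `z₂ₖ x₀`. -/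
def lowBlock (k j : ℕ) : ℕ :=
  if j = 0 then 0 else if j < k then j + 1 else j + 2

/-- The cyclic predecessor of the column `j` among the columns `0, …, 2k`. -/
def prevCol (k j : ℕ) : ℕ :=
  if j = 0 then 2 * k else j - 1

/-- The low vertex `xⱼ` of the zigzag with offsets `y`. -/
def lowVertex (k N : ℕ) (y : ℕ → ℕ) (j : ℕ) : ℕ :=
  lowBlock k j * N + y (prevCol k j)

/-- The high vertex `zⱼ` of the zigzag with offsets `y`, adjacent to `xⱼ` and `xⱼ₊₁`, with
cyclic indices. -/
def highVertex (k N : ℕ) (y : ℕ → ℕ) (j : ℕ) : ℕ :=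
  (4 * k + 2 - j) * N + y (prevCol k j) + y j

/-- The zigzag `x₀ z₀ x₁ z₁ … x₂ₖ z₂ₖ` with offsets `y`, as a sequence of `4k + 2` integers. -/
def zigzag (k N : ℕ) (y : ℕ → ℕ) (p : ℕ) : ℕ :=
  if p % 2 = 0 then lowVertex k N y (p / 2) else highVertex k N y (p / 2)

/-- The index of the low vertex on the edge in position `p` of the zigzag; the high vertex on this
edge has index `p / 2`. -/
def lowEnd (k p : ℕ) : ℕ :=
  if p = 4 * k + 1 then 0 else (p + 1) / 2

/-- The block of the length of the edge in position `p` of the zigzag. -/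
def edgeBlock (k p : ℕ) : ℕ :=
  4 * k + 2 - p / 2 - lowBlock k (lowEnd k p)

/-- The column whose offset enters the length of the edge in position `p` of the zigzag. -/
def edgeCol (k p : ℕ) : ℕ :=
  if p % 2 = 0 then p / 2 else prevCol k (p / 2)

/-- The column whose offset enters the low end of the edge in position `p` of the zigzag. -/
def lowCol (k p : ℕ) : ℕ :=
  prevCol k (lowEnd k p)

/-- The length of the edge in position `p` of the zigzag with offsets `y`. -/
def edgeLength (k N : ℕ) (y : ℕ → ℕ) (p : ℕ) : ℕ :=
  edgeBlock k p * N + y (edgeCol k p)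

variable {k N : ℕ} {y z : ℕ → ℕ}

theorem lowVertex_lt_lowVertex (hy : ∀ c, y c ∈ Set.Icc 1 N) {i j : ℕ} (hij : i < j) :
    lowVertex k N y i < lowVertex k N y j := by
  refine mul_add_lt_mul_add ?_ (hy _).2 (hy _).1
  unfold lowBlock
  split_ifs <;> omega

theorem highVertex_lt_highVertex (hy : ∀ c, y c ∈ Set.Icc 1 N) {i j : ℕ} (hij : i < j)
    (hj : j ≤ 2 * k) : highVertex k N y j < highVertex k N y i := by
  have hprev := hy (prevCol k j)
  have hcur := hy j
  have hother := hy (prevCol k i)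
  rw [Set.mem_Icc] at hprev hcur hother
  obtain rfl | hgap := (Nat.succ_le_of_lt hij).eq_or_lt
  · have hcol : prevCol k (i + 1) = i := by simp [prevCol]
    have := mul_add_lt_mul_add (a := 4 * k + 2 - (i + 1)) (b := 4 * k + 2 - i) (by omega)
      hcur.2 hother.1
    simp only [highVertex, Nat.succ_eq_add_one, hcol] at *
    omega
  · have := Nat.mul_le_mul_right N (show 4 * k + 2 - j + 2 ≤ 4 * k + 2 - i by omega)
    unfold highVertex
    linarith

theorem lowVertex_lt_highVertex (hy : ∀ c, y c ∈ Set.Icc 1 N) {i j : ℕ}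
    (hi : i ≤ 2 * k) (hj : j ≤ 2 * k) : lowVertex k N y i < highVertex k N y j := by
  have hblock : lowBlock k i < 4 * k + 2 - j ∨
      i = j ∧ lowBlock k i = 4 * k + 2 - j := by
    unfold lowBlock
    split_ifs <;> omega
  unfold lowVertex highVertex
  obtain hlt | ⟨rfl, heq⟩ := hblock
  · rw [add_assoc]
    exact mul_add_lt_mul_add hlt (hy _).2 (Nat.add_pos_left (hy _).1 _)
  · rw [heq]
    exact Nat.lt_add_of_pos_right (hy _).1

theorem injOn_zigzag (hy : ∀ c, y c ∈ Set.Icc 1 N) :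
    Set.InjOn (zigzag k N y) (Set.Iio (4 * k + 2)) := by
  intro p hp q hq h
  wlog hpq : p < q generalizing p q
  · rcases (not_lt.mp hpq).lt_or_eq with hqp | hqp
    · exact (this hq hp h.symm hqp).symm
    · exact hqp.symm
  rw [Set.mem_Iio] at hp hq
  unfold zigzag at h
  split_ifs at h with hp₂ hq₂ hq₂
  · exact absurd h (lowVertex_lt_lowVertex hy (by omega)).ne
  · exact absurd h (lowVertex_lt_highVertex hy (by omega) (by omega)).ne
  · exact absurd h (lowVertex_lt_highVertex hy (by omega) (by omega)).ne'
  · exact absurd h (highVertex_lt_highVertex hy (by omega) (by omega)).ne'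

theorem zigzag_lt (hy : ∀ c, y c ∈ Set.Icc 1 N) {p : ℕ} (hp : p < 4 * k + 2) :
    zigzag k N y p < (8 * k + 4) * N + 1 := by
  have hhigh (j : ℕ) : highVertex k N y j ≤ (4 * k + 4) * N := by
    have := Nat.mul_le_mul_right N (show 4 * k + 2 - j ≤ 4 * k + 2 by omega)
    unfold highVertex
    linarith [(hy (prevCol k j)).2, (hy j).2]
  have hle : zigzag k N y p ≤ (4 * k + 4) * N := by
    unfold zigzag
    split_ifs
    · exact (lowVertex_lt_highVertex hy (by omega) (by omega)).le.trans (hhigh (p / 2))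
    · exact hhigh _
  exact Nat.lt_succ_of_le (hle.trans (Nat.mul_le_mul_right N (by omega)))

theorem lowVertex_add_edgeLength {p : ℕ} (hp : p < 4 * k + 2) :
    lowVertex k N y (lowEnd k p) + edgeLength k N y p = highVertex k N y (p / 2) := by
  have hblock : lowBlock k (lowEnd k p) + edgeBlock k p = 4 * k + 2 - p / 2 := by
    refine Nat.add_sub_cancel' ?_
    unfold lowEnd lowBlock
    split_ifs <;> omega
  have hcol : y (lowCol k p) + y (edgeCol k p) = y (prevCol k (p / 2)) + y (p / 2) := by
    rcases Nat.mod_two_eq_zero_or_one p with hp₂ | hp₂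
    · have : lowEnd k p = p / 2 := by unfold lowEnd; split_ifs <;> omega
      simp only [lowCol, edgeCol, this, if_pos hp₂]
    · have : lowCol k p = p / 2 := by unfold lowCol lowEnd prevCol; split_ifs <;> omega
      simp only [this, edgeCol, hp₂, one_ne_zero, if_false, add_comm]
  rw [highVertex, ← hblock, add_assoc, ← hcol, lowVertex, edgeLength, lowCol]
  ring

theorem zigzag_add_one_mod_sub {p : ℕ} (hp : p < 4 * k + 2) :
    (zigzag k N y ((p + 1) % (4 * k + 2)) : ℤ) - zigzag k N y p =
      (-1) ^ p * edgeLength k N y p := by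
  have hedge := congrArg (Nat.cast : ℕ → ℤ) (lowVertex_add_edgeLength (N := N) (y := y) hp)
  push_cast at hedge
  obtain ⟨j, rfl | rfl⟩ := p.even_or_odd'
  · have hlow : lowEnd k (2 * j) = j := by unfold lowEnd; split_ifs <;> omega
    have hj : 2 * j / 2 = j := by omega
    have hj₁ : (2 * j + 1) / 2 = j := by omega
    rw [Nat.mod_eq_of_lt (by omega), (even_two_mul j).neg_one_pow, zigzag, zigzag,
      if_neg (by omega), if_pos (by omega), hj, hj₁]
    rw [hlow, hj] at hedge
    linear_combination -hedge
  · have hlow : (2 * j + 1 + 1) % (4 * k + 2) = 2 * lowEnd k (2 * j + 1) := by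
      unfold lowEnd
      split_ifs with hlast
      · rw [hlast, Nat.mod_self]
      · rw [Nat.mod_eq_of_lt (by omega)]
        omega
    have hhalf : 2 * lowEnd k (2 * j + 1) / 2 = lowEnd k (2 * j + 1) := by omega
    rw [hlow, (odd_two_mul_add_one j).neg_one_pow, zigzag, zigzag, if_pos (by omega),
      if_neg (by omega), hhalf]
    linear_combination hedge

theorem injOn_edgeBlock (hk : 1 ≤ k) : Set.InjOn (edgeBlock k) (Set.Iio (4 * k + 2)) := by
  intro p hp q hq h
  rw [Set.mem_Iio] at hp hq
  unfold edgeBlock lowEnd lowBlock at h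
  split_ifs at h <;> omega

theorem edgeBlock_le_or_eq (hk : 1 ≤ k) {p : ℕ} (hp : p < 4 * k + 2) :
    edgeBlock k p ≤ 4 * k ∨ edgeBlock k p = 4 * k + 2 := by
  unfold edgeBlock lowEnd lowBlock
  split_ifs <;> omega

theorem edgeLength_le (hk : 1 ≤ k) (hy : ∀ c, y c ∈ Set.Icc 1 N) {p : ℕ} (hp : p < 4 * k + 2) :
    edgeLength k N y p ≤ (4 * k + 3) * N := by
  have hblock : edgeBlock k p ≤ 4 * k + 2 := by have := edgeBlock_le_or_eq hk hp; omega
  have := Nat.mul_le_mul_right N hblock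
  unfold edgeLength
  linarith [(hy (edgeCol k p)).2]

theorem edgeLength_eq_iff (hk : 1 ≤ k) (hy : ∀ c, y c ∈ Set.Icc 1 N) (hz : ∀ c, z c ∈ Set.Icc 1 N)
    {p q : ℕ} (hp : p < 4 * k + 2) (hq : q < 4 * k + 2) :
    edgeLength k N y p = edgeLength k N z q ↔ p = q ∧ y (edgeCol k p) = z (edgeCol k p) := by
  rw [edgeLength, edgeLength, mul_add_inj (hy _) (hz _), (injOn_edgeBlock hk).eq_iff hp hq]
  exact and_congr_right fun h => by rw [h]

theorem edgeLength_add_edgeLength_ne (hk : 1 ≤ k) (hy : ∀ c, y c ∈ Set.Icc 1 N)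
    (hz : ∀ c, z c ∈ Set.Icc 1 N) {p q : ℕ} (hp : p < 4 * k + 2) (hq : q < 4 * k + 2) :
    edgeLength k N y p + edgeLength k N z q ≠ (8 * k + 4) * N + 1 := by
  have hx := hy (edgeCol k p)
  have hw := hz (edgeCol k q)
  rw [Set.mem_Icc] at hx hw
  have hblocks := edgeBlock_le_or_eq hk hp
  have hblocks' := edgeBlock_le_or_eq hk hq
  have : edgeBlock k p + edgeBlock k q + 2 ≤ 8 * k + 4 ∨
    8 * k + 4 ≤ edgeBlock k p + edgeBlock k q := by omega
  unfold edgeLength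
  obtain h | h := this <;> have := Nat.mul_le_mul_right N h <;> nlinarith

theorem lowCol_ne_of_edgeCol_eq (hk : 1 ≤ k) {p q : ℕ} (hp : p < 4 * k + 2) (hq : q < 4 * k + 2)
    (hpq : p ≠ q) (h : edgeCol k p = edgeCol k q) : lowCol k p ≠ lowCol k q := by
  unfold edgeCol prevCol at h
  unfold lowCol lowEnd prevCol
  split_ifs at * <;> omega

theorem edgeCol_le {p : ℕ} (hp : p < 4 * k + 2) : edgeCol k p ≤ 2 * k := by
  unfold edgeCol prevCol
  split_ifs <;> omega

theorem lowCol_le {p : ℕ} (hp : p < 4 * k + 2) : lowCol k p ≤ 2 * k := by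
  unfold lowCol lowEnd prevCol
  split_ifs <;> omega

theorem zigzag_sub_zigzag {p : ℕ} (hp : p < 4 * k + 2) (h : y (edgeCol k p) = z (edgeCol k p)) :
    (zigzag k N y p : ℤ) - zigzag k N z p = y (lowCol k p) - z (lowCol k p) := by
  unfold zigzag
  split_ifs with hp₂
  · have : lowEnd k p = p / 2 := by unfold lowEnd; split_ifs <;> omega
    simp only [lowVertex, lowCol, this]
    push_cast
    ring
  · rw [← lowVertex_add_edgeLength hp, ← lowVertex_add_edgeLength hp]
    simp only [lowVertex, edgeLength, lowCol, h]
    push_cast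
    ring

end BlockZigzag

section BaseCycle

variable {k N n : ℕ} {y z : ℕ → ℕ}

/-- The zigzag with offsets `y`, reduced modulo `n`. -/
def baseCycle (n k N : ℕ) (y : ℕ → ℕ) (p : Fin (4 * k + 2)) : ZMod n :=
  zigzag k N y p

theorem baseCycle_injective (hn : n = (8 * k + 4) * N + 1)
    (hy : ∀ c, y c ∈ Set.Icc 1 N) : Injective (baseCycle n k N y) := by
  subst hn
  intro p q h
  have := CharP.natCast_injOn_Iio (ZMod _) _ (zigzag_lt hy p.2) (zigzag_lt hy q.2) h
  exact Fin.ext (injOn_zigzag hy p.2 q.2 this)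

theorem signedStep_baseCycle (u : Fin (4 * k + 2) × ℤˣ) :
    signedStep (baseCycle n k N y) u =
      (u.2 * (-1) ^ u.1.val) • (edgeLength k N y u.1 : ZMod n) := by
  have hstep := congrArg (Int.cast : ℤ → ZMod n) (zigzag_add_one_mod_sub (N := N) (y := y) u.1.2)
  have hval : (u.1 + 1).val = (u.1.val + 1) % (4 * k + 2) := by simp [Fin.val_add]
  push_cast at hstep
  rw [signedStep, mul_smul, baseCycle, baseCycle, hval, hstep, Units.smul_def ((-1) ^ _)]
  simp

theorem signedStep_baseCycle_eq_iff (hk : 1 ≤ k) (hn : n = (8 * k + 4) * N + 1)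
    (hy : ∀ c, y c ∈ Set.Icc 1 N) (hz : ∀ c, z c ∈ Set.Icc 1 N) {u v : Fin (4 * k + 2) × ℤˣ} :
    signedStep (baseCycle n k N y) u = signedStep (baseCycle n k N z) v ↔
      u = v ∧ y (edgeCol k u.1) = z (edgeCol k u.1) := by
  obtain ⟨⟨p, s⟩, q, t⟩ := u, v
  have length_pos {w : ℕ → ℕ} (hw : ∀ c, w c ∈ Set.Icc 1 N) (p : Fin (4 * k + 2)) :
      0 < edgeLength k N w p := Nat.add_pos_right _ (hw _).1
  have length_lt {w : ℕ → ℕ} (hw : ∀ c, w c ∈ Set.Icc 1 N) (p : Fin (4 * k + 2)) :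
      edgeLength k N w p < n := by
    rw [hn, Nat.lt_succ_iff]
    exact (edgeLength_le hk hw p.2).trans (Nat.mul_le_mul_right N (by omega))
  rw [signedStep_baseCycle, signedStep_baseCycle, units_smul_natCast_eq_iff
    (length_pos hy p) (length_lt hy p) (length_lt hz q)
    (hn ▸ edgeLength_add_edgeLength_ne hk hy hz p.2 q.2),
    edgeLength_eq_iff hk hy hz p.2 q.2, Prod.mk.injEq, ← Fin.ext_iff]
  constructor
  · rintro ⟨hs, rfl, h⟩
    exact ⟨⟨rfl, mul_right_cancel hs⟩, h⟩
  · rintro ⟨⟨rfl, rfl⟩, h⟩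
    exact ⟨rfl, rfl, h⟩

theorem baseCycle_sub_baseCycle {p : Fin (4 * k + 2)}
    (h : y (edgeCol k p) = z (edgeCol k p)) :
    baseCycle n k N y p - baseCycle n k N z p =
      (y (lowCol k p) : ZMod n) - z (lowCol k p) := by
  have := congrArg (Int.cast : ℤ → ZMod n) (zigzag_sub_zigzag (N := N) p.2 h)
  push_cast at this
  exact this

theorem injOn_baseCycle_sub_baseCycle (hk : 1 ≤ k) (hn : n = (8 * k + 4) * N + 1)
    (hy : ∀ c, y c ∈ Set.Icc 1 N) (hz : ∀ c, z c ∈ Set.Icc 1 N)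
    (hyz : Set.InjOn (fun c => (y c : ℤ) - z c) (Set.Iic (2 * k))) :
    Set.InjOn (fun p => baseCycle n k N y p - baseCycle n k N z p)
      {p | signedStep (baseCycle n k N y) (p, 1) = signedStep (baseCycle n k N z) (p, 1)} := by
  intro p hp q hq hshift
  replace hp := ((signedStep_baseCycle_eq_iff hk hn hy hz).mp hp).2
  replace hq := ((signedStep_baseCycle_eq_iff hk hn hy hz).mp hq).2
  have hcol : edgeCol k p = edgeCol k q :=
    hyz (edgeCol_le p.2) (edgeCol_le q.2) (by simp [hp, hq])
  by_contra hpq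
  refine lowCol_ne_of_edgeCol_eq hk p.2 q.2 (Fin.val_ne_of_ne hpq) hcol ?_
  have hN : 2 * N < n := by nlinarith
  refine injOn_natCast_sub_natCast hN hy hz hyz (lowCol_le p.2) (lowCol_le q.2) ?_
  simpa only [baseCycle_sub_baseCycle hp, baseCycle_sub_baseCycle hq] using hshift

end BaseCycle

section OffsetSystem

variable {k N n i i' : ℕ}

/-- The base cycles of the system `i`: the zigzags whose offsets are arithmetic progressions modulo
`N` with difference `i`. -/
def offsetFamily (n k N i : ℕ) (r : Fin N) : Fin (4 * k + 2) → ZMod n :=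
  baseCycle n k N (offset N i r)

theorem isDifferenceFamily_offsetFamily (hk : 1 ≤ k) (hn : n = (8 * k + 4) * N + 1) (i : ℕ) :
    IsDifferenceFamily (offsetFamily n k N i) := by
  have : NeZero n := ⟨by omega⟩
  refine .of_injective (fun r => baseCycle_injective hn (offset_mem_Icc r.pos i r)) ?_ ?_
  · rintro ⟨r, u⟩ ⟨r', v⟩ h
    obtain ⟨rfl, hoff⟩ := (signedStep_baseCycle_eq_iff hk hn (offset_mem_Icc r.pos i r)
      (offset_mem_Icc r.pos i r')).mp h
    rw [Fin.ext (injOn_offset N i _ r.2 r'.2 hoff)]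
  · rw [ZMod.card, Fintype.card_fin, hn]
    ring

theorem orthog_development_offsetFamily (hk : 1 ≤ k) (hn : n = (8 * k + 4) * N + 1)
    (hi : 2 * k * i < N) (hi' : 2 * k * i' < N) (hne : i ≠ i') :
    Orthog (development (offsetFamily n k N i)) (development (offsetFamily n k N i')) := by
  have hN : 0 < N := by omega
  refine orthog_development (fun r r' u v h => ?_) fun r r' => ?_
  · exact ((signedStep_baseCycle_eq_iff hk hn (offset_mem_Icc hN i r)
      (offset_mem_Icc hN i' r')).mp h).1
  · exact injOn_baseCycle_sub_baseCycle hk hn (offset_mem_Icc hN i r) (offset_mem_Icc hN i' r')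
      (injOn_offset_sub_offset hi hi' hne r r')

end OffsetSystem

theorem stmt_13_general (k N n : ℕ) (hk : 1 ≤ k) (hn : n = (8 * k + 4) * N + 1) :
    ∃ S : Set (Set (Finset (Sym2 (ZMod n)))),
      (∀ F ∈ S, IsCycleSystem (4 * k + 2) F ∧ IsCyclicSystem F) ∧
      S.Pairwise Orthog ∧
      ((n : ℝ) - 1) / ((8 * (k : ℝ) + 4) * (2 * (k : ℝ))) ≤ S.ncard := by
  have h2k : 0 < 2 * k := by omega
  let system (i : ℕ) := development (offsetFamily n k N i)
  have cycleSystem (i : ℕ) : IsCycleSystem (4 * k + 2) (system i) :=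
    (isDifferenceFamily_offsetFamily hk hn i).isCycleSystem_development
  have mul_lt {i : ℕ} (hi : i ∈ Set.Iio (N ⌈/⌉ (2 * k))) : 2 * k * i < N := by
    by_contra! h
    exact (ceilDiv_le_iff_le_mul h2k).mpr h |>.not_gt hi
  have injOn : Set.InjOn system (Set.Iio (N ⌈/⌉ (2 * k))) := by
    intro i hi i' hi' h
    by_contra hne
    exact (orthog_development_offsetFamily hk hn (mul_lt hi) (mul_lt hi') hne).ne (cycleSystem i).1
      (by omega) ⟨_, ⟨0, Nat.zero_lt_of_lt (mul_lt hi)⟩, 0, rfl⟩ h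
  refine ⟨system '' Set.Iio (N ⌈/⌉ (2 * k)), ?_, ?_, ?_⟩
  · rintro _ ⟨i, -, rfl⟩
    exact ⟨cycleSystem i, isCyclicSystem_development _⟩
  · rintro _ ⟨i, hi, rfl⟩ _ ⟨i', hi', rfl⟩ hne
    exact orthog_development_offsetFamily hk hn (mul_lt hi) (mul_lt hi') (ne_of_apply_ne _ hne)
  · have hceil : N ≤ 2 * k * (N ⌈/⌉ (2 * k)) := le_smul_ceilDiv h2k
    have hceil' : (N : ℝ) ≤ 2 * k * (N ⌈/⌉ (2 * k) : ℕ) := by exact_mod_cast hceil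
    rw [injOn.ncard_image, Set.ncard_Iio_nat, div_le_iff₀ (by positivity), hn]
    push_cast
    nlinarith

/-- Theorem: for `k ≥ 1` and `n = (8k+4)N + 1`, there is a set of mutually orthogonal
cyclic `(4k+2)`-cycle systems of `K_n` of cardinality at least
`N/(96k+30) - 1 = (n-1)/((8k+4)(96k+30)) - 1`; in particular
`μ(4k+2,n) ≥ μ'(4k+2,n) ≥ (n-1)/((8k+4)(96k+30)) - 1`. -/
theorem stmt_13 (k N n : ℕ) (hk : 1 ≤ k) (hN : 0 < N) (hn : n = (8 * k + 4) * N + 1) :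
    ∃ S : Set (Set (Finset (Sym2 (ZMod n)))),
      (∀ F ∈ S, IsCycleSystem (4 * k + 2) F ∧ IsCyclicSystem F) ∧
      S.Pairwise Orthog ∧
      ((n : ℝ) - 1) / ((8 * (k : ℝ) + 4) * (96 * (k : ℝ) + 30)) - 1 ≤ S.ncard := by
  obtain ⟨S, hsys, horth, hcard⟩ := stmt_13_general k N n hk hn
  refine ⟨S, hsys, horth, (sub_le_self _ zero_le_one).trans (le_trans ?_ hcard)⟩
  have hn₀ : (0 : ℝ) ≤ n - 1 := sub_nonneg.mpr (mod_cast hn ▸ Nat.le_add_left 1 _)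
  gcongr
  linarith
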